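/- A function f : [0,1] → ℝ has a continuous modulus if and only if f is induced by a code of a continuous function. -/

import Mathlib

open Filter

/-- A regular sequence of rationals: `|r n - r (n+1)| ≤ 2^(-(n+1))`. -/
def Regular (r : ℕ → ℚ) : Prop := ∀ n : ℕ, |r n - r (n + 1)| ≤ 1 / 2 ^ (n + 1)

/-- The real number determined by a (regular, hence Cauchy) sequence of rationals. -/
noncomputable def rlim (r : ℕ → ℚ) : ℝ := limUnder atTop fun n => (r n : ℝ)

/-- `x` is a regular sequence representing a real number in the unit interval. -/
noncomputable def InUnit (x : ℕ → ℚ) : Prop := Regular x ∧ rlim x ∈ Set.Icc (0 : ℝ) 1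

/-- `triN s` : numbering of the nodes of the ternary tree:
`N(⟨⟩) = 1`, `N(s * ⟨i⟩) = 2 * N(s) + i - 1`. -/
def triN (s : List (Fin 3)) : ℕ := s.foldl (fun a i => 2 * a + i.val - 1) 1

/-- Initial segment of length `n` of `α`. -/
def seg3 (α : ℕ → Fin 3) (n : ℕ) : List (Fin 3) := List.ofFn fun i : Fin n => α i

/-- `Phi α` is the limit of the Cauchy sequence `x_α^n = 2^(-(n+1)) * N(ᾱ n)`. -/
noncomputable def Phi (α : ℕ → Fin 3) : ℝ :=
  limUnder atTop fun n => (triN (seg3 α n) : ℝ) / 2 ^ (n + 1)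

/-- `f : [0,1] → ℝ` has a continuous modulus: a family `g k` of pointwise continuous
functions on the underlying set of regular sequences in `[0,1]` such that
`|x - y| ≤ 2^(-(g k x))` implies `|f x - f y| ≤ 2^(-k)`. -/
def HasContModulus (f : ℝ → ℝ) : Prop :=
  ∃ g : ℕ → (ℕ → ℚ) → ℕ,
    (∀ (k : ℕ) (x y : ℕ → ℚ), InUnit x → InUnit y →
      |rlim x - rlim y| ≤ 1 / 2 ^ g k x → |f (rlim x) - f (rlim y)| ≤ 1 / 2 ^ k) ∧
    (∀ (k : ℕ) (x : ℕ → ℚ), InUnit x → ∃ n : ℕ, ∀ y : ℕ → ℚ, InUnit y →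
      (∀ i < n, x i = y i) → g k x = g k y)

/-- `f : [0,1] → ℝ` has a continuous ternary modulus: a family `g k` of pointwise
continuous functions on `{0,1,2}^ℕ` such that `|Φ α - x| ≤ 2^(-(g k α))` implies
`|f (Φ α) - f x| ≤ 2^(-k)`. -/
def HasContTernModulus (f : ℝ → ℝ) : Prop :=
  ∃ g : ℕ → (ℕ → Fin 3) → ℕ,
    (∀ (k : ℕ) (α : ℕ → Fin 3), ∀ x ∈ Set.Icc (0 : ℝ) 1,
      |Phi α - x| ≤ 1 / 2 ^ g k α → |f (Phi α) - f x| ≤ 1 / 2 ^ k) ∧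
    (∀ (k : ℕ) (α : ℕ → Fin 3), ∃ n : ℕ, ∀ β : ℕ → Fin 3,
      seg3 α n = seg3 β n → g k α = g k β)

/-- `f : [0,1] → ℝ` is uniformly continuous on the unit interval, with a modulus `ω`. -/
def UnifContOn (f : ℝ → ℝ) : Prop :=
  ∃ ω : ℕ → ℕ, ∀ k : ℕ, ∀ x ∈ Set.Icc (0 : ℝ) 1, ∀ y ∈ Set.Icc (0 : ℝ) 1,
    |x - y| ≤ 1 / 2 ^ ω k → |f x - f y| ≤ 1 / 2 ^ k

/-- The rational interval `I_s = [2^(-(|s|+1))·(N s - 1), 2^(-(|s|+1))·(N s + 1)]`. -/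
def Iseg (s : List (Fin 3)) : ℚ × ℚ :=
  (((triN s : ℚ) - 1) / 2 ^ (s.length + 1), ((triN s : ℚ) + 1) / 2 ^ (s.length + 1))

/-- `I ≈ J`: the rational intervals `I` and `J` overlap. -/
def approxI (I J : ℚ × ℚ) : Prop := J.1 ≤ I.2 ∧ I.1 ≤ J.2

/-- A code of a continuous function (Loeb). -/
def IsCode (φ : List (Fin 3) → Option (ℚ × ℚ)) : Prop :=
  (∀ (s : List (Fin 3)) (p q : ℚ), φ s = some (p, q) → p ≤ q) ∧
  (∀ (k : ℕ) (α : ℕ → Fin 3), ∃ (n : ℕ) (p q : ℚ),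
    φ (seg3 α n) = some (p, q) ∧ q - p ≤ 1 / 2 ^ k) ∧
  (∀ (s : List (Fin 3)) (I : ℚ × ℚ), φ s = some I → ∀ i : Fin 3,
    ∃ J : ℚ × ℚ, φ (s ++ [i]) = some J ∧ I.1 ≤ J.1 ∧ J.2 ≤ I.2) ∧
  (∀ (s t : List (Fin 3)) (I J : ℚ × ℚ), φ s = some I → φ t = some J →
    approxI (Iseg s) (Iseg t) → approxI I J)

/-- At stage `n`, the code `φ` produces along `α` an interval of length `≤ 2^(-k)`. -/
def goodAt (φ : List (Fin 3) → Option (ℚ × ℚ)) (α : ℕ → Fin 3) (k n : ℕ) : Prop :=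
  ∃ p q : ℚ, φ (seg3 α n) = some (p, q) ∧ q - p ≤ 1 / 2 ^ k

open Classical in
/-- `hIdx φ α k` is the least `n` such that `φ (ᾱ n)` is an interval of length
`≤ 2^(-k)` (and `0` if there is none). -/
noncomputable def hIdx (φ : List (Fin 3) → Option (ℚ × ℚ)) (α : ℕ → Fin 3) (k : ℕ) : ℕ :=
  if h : ∃ n, goodAt φ α k n then Nat.find h else 0

/-- Left endpoint of an optional rational interval. -/
def leftOf (o : Option (ℚ × ℚ)) : ℚ := (o.getD (0, 0)).1

/-- `f` is induced by the code `φ`: for every `α`, `f (Φ α)` is the limit of the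
left endpoints of the intervals `φ (ᾱ (h_n α))`. -/
def InducedBy (f : ℝ → ℝ) (φ : List (Fin 3) → Option (ℚ × ℚ)) : Prop :=
  ∀ α : ℕ → Fin 3,
    Tendsto (fun n => (leftOf (φ (seg3 α (hIdx φ α n))) : ℝ)) atTop (nhds (f (Phi α)))

/-!
Both conditions say that `f` is continuous on `[0,1]`.

A modulus gives continuity at each point, and conversely compactness of `[0,1]` makes a continuous
`f` uniformly continuous, so that its modulus can be taken constant in the representing sequence.

Call `I_s` the interval of the node `s`. Since `Φ` is onto `[0,1]` and `Φ α` lies in every interval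
along the branch `α`, condition (C4) shows that a code `φ` induces `f` exactly when `f` maps `I_s`
into `φ s` wherever `φ s` is defined. By (C2), `f ∘ Φ` is then continuous on `{0,1,2}^ℕ`, and `f` is
continuous because `Φ` is a quotient map. Conversely, rounding the range of `f` on `I_s` outwards to
multiples of `2^(-|s|)` gives a code of a continuous `f`.
-/

open Set Topology

section DyadicRounding

theorem tendsto_one_div_two_pow : Tendsto (fun n : ℕ => (1 : ℝ) / 2 ^ n) atTop (𝓝 0) := by
  simpa only [one_div_pow] using
    tendsto_pow_atTop_nhds_zero_of_lt_one (r := (1 / 2 : ℝ)) (by norm_num) (by norm_num)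

theorem exists_one_div_two_pow_lt {ε : ℝ} (hε : 0 < ε) : ∃ n : ℕ, (1 : ℝ) / 2 ^ n < ε :=
  (tendsto_one_div_two_pow.eventually_lt_const hε).exists

theorem cast_le_one_div_two_pow {q : ℚ} {n : ℕ} : (q : ℝ) ≤ 1 / 2 ^ n ↔ q ≤ 1 / 2 ^ n := by
  rw [← Rat.cast_le (K := ℝ)]
  push_cast
  rfl

/-- The largest multiple of `2^(-n)` that is at most `x`, as a rational number; it rounds lower
bounds of ranges to rational endpoints. -/
noncomputable def dyadicFloor (n : ℕ) (x : ℝ) : ℚ := ⌊2 ^ n * x⌋ / 2 ^ n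

/-- The smallest multiple of `2^(-n)` that is at least `x`, as a rational number; it rounds upper
bounds of ranges to rational endpoints. -/
noncomputable def dyadicCeil (n : ℕ) (x : ℝ) : ℚ := ⌈2 ^ n * x⌉ / 2 ^ n

theorem dyadicCeil_eq_neg_dyadicFloor_neg (n : ℕ) (x : ℝ) :
    dyadicCeil n x = -dyadicFloor n (-x) := by
  simp [dyadicCeil, dyadicFloor, Int.floor_neg, neg_div]

theorem dyadicFloor_le (n : ℕ) (x : ℝ) : (dyadicFloor n x : ℝ) ≤ x := by
  simpa [dyadicFloor, div_le_iff₀, mul_comm x] using Int.floor_le (2 ^ n * x)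

theorem le_dyadicCeil (n : ℕ) (x : ℝ) : x ≤ dyadicCeil n x := by
  rw [dyadicCeil_eq_neg_dyadicFloor_neg, Rat.cast_neg, le_neg]
  exact dyadicFloor_le n (-x)

theorem lt_dyadicFloor_add (n : ℕ) (x : ℝ) : x < dyadicFloor n x + 1 / 2 ^ n := by
  simp [dyadicFloor, -one_div, ← add_div, lt_div_iff₀, mul_comm x]

theorem dyadicCeil_lt_add (n : ℕ) (x : ℝ) : dyadicCeil n x < x + 1 / 2 ^ n := by
  rw [dyadicCeil_eq_neg_dyadicFloor_neg, Rat.cast_neg]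
  linarith [lt_dyadicFloor_add n (-x)]

theorem dyadicFloor_monotone (n : ℕ) : Monotone (dyadicFloor n) := fun x y hxy => by
  unfold dyadicFloor
  gcongr

theorem dyadicCeil_monotone (n : ℕ) : Monotone (dyadicCeil n) := fun x y hxy => by
  unfold dyadicCeil
  gcongr

theorem dyadicFloor_le_succ (n : ℕ) (x : ℝ) : dyadicFloor n x ≤ dyadicFloor (n + 1) x := by
  have h_floor : 2 * ⌊2 ^ n * x⌋ ≤ ⌊2 ^ (n + 1) * x⌋ := by
    rw [Int.le_floor, pow_succ']
    push_cast
    linarith [Int.floor_le (2 ^ n * x)]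
  calc dyadicFloor n x = ((2 * ⌊2 ^ n * x⌋ : ℤ) : ℚ) / 2 ^ (n + 1) := by
        rw [dyadicFloor, pow_succ']
        push_cast
        rw [mul_div_mul_left _ _ two_ne_zero]
    _ ≤ dyadicFloor (n + 1) x := by
        unfold dyadicFloor
        gcongr

theorem dyadicCeil_succ_le (n : ℕ) (x : ℝ) : dyadicCeil (n + 1) x ≤ dyadicCeil n x := by
  simpa only [dyadicCeil_eq_neg_dyadicFloor_neg, neg_le_neg_iff] using dyadicFloor_le_succ n (-x)

end DyadicRounding

section UniformContinuity

variable {f : ℝ → ℝ}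

theorem unifContOn_of_continuousOn (hf : ContinuousOn f (Icc 0 1)) : UnifContOn f := by
  have hf_unif := Metric.uniformContinuousOn_iff_le.1
    (isCompact_Icc.uniformContinuousOn_of_continuous hf)
  have h_modulus (k : ℕ) : ∃ m : ℕ, ∀ x ∈ Icc (0 : ℝ) 1, ∀ y ∈ Icc (0 : ℝ) 1,
      |x - y| ≤ 1 / 2 ^ m → |f x - f y| ≤ 1 / 2 ^ k := by
    obtain ⟨δ, hδ, h⟩ := hf_unif (1 / 2 ^ k) (by positivity)
    obtain ⟨m, hm⟩ := exists_one_div_two_pow_lt hδ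
    exact ⟨m, fun x hx y hy hxy => h x hx y hy (hxy.trans hm.le)⟩
  choose ω hω using h_modulus
  exact ⟨ω, hω⟩

theorem hasContModulus_of_unifContOn (hf : UnifContOn f) : HasContModulus f := by
  obtain ⟨ω, hω⟩ := hf
  exact ⟨fun k _ => ω k, fun k x y hx hy => hω k _ hx.2 _ hy.2, fun _ _ _ => ⟨0, fun _ _ _ => rfl⟩⟩

theorem regular_of_abs_sub_le {x : ℝ} {r : ℕ → ℚ} (hr : ∀ n, |x - r n| ≤ 1 / 2 ^ (n + 2)) :
    Regular r := by
  intro n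
  rw [← cast_le_one_div_two_pow]
  push_cast
  calc |(r n : ℝ) - r (n + 1)|
      ≤ |(r n : ℝ) - x| + |x - r (n + 1)| := abs_sub_le _ _ _
    _ ≤ 1 / 2 ^ (n + 2) + 1 / 2 ^ (n + 2) := by
        rw [abs_sub_comm (r n : ℝ)]
        exact add_le_add (hr n) ((hr (n + 1)).trans (by gcongr <;> norm_num))
    _ = 1 / 2 ^ (n + 1) := by ring

theorem exists_regular_rlim_eq (x : ℝ) : ∃ r : ℕ → ℚ, Regular r ∧ rlim r = x := by
  have h_near (n : ℕ) : ∃ q : ℚ, |x - q| < 1 / 2 ^ (n + 2) := exists_rat_near x (by positivity)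
  choose r hr using h_near
  refine ⟨r, regular_of_abs_sub_le fun n => (hr n).le, Tendsto.limUnder_eq ?_⟩
  refine tendsto_iff_dist_tendsto_zero.2 (squeeze_zero (fun _ => dist_nonneg) (fun n => ?_)
    (tendsto_one_div_two_pow.comp (tendsto_add_atTop_nat 2)))
  rw [dist_comm]
  exact (hr n).le

theorem HasContModulus.continuousOn (hf : HasContModulus f) : ContinuousOn f (Icc 0 1) := by
  obtain ⟨g, hg, -⟩ := hf
  rw [Metric.continuousOn_iff]
  intro x hx ε hε
  obtain ⟨k, hk⟩ := exists_one_div_two_pow_lt hε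
  obtain ⟨r, hr, rfl⟩ := exists_regular_rlim_eq x
  refine ⟨1 / 2 ^ g k r, by positivity, fun y hy hyx => ?_⟩
  obtain ⟨t, ht, rfl⟩ := exists_regular_rlim_eq y
  rw [dist_comm] at hyx ⊢
  exact (hg k r t ⟨hr, hx⟩ ⟨ht, hy⟩ hyx.le).trans_lt hk

theorem hasContModulus_iff_continuousOn : HasContModulus f ↔ ContinuousOn f (Icc 0 1) :=
  ⟨HasContModulus.continuousOn, fun hf =>
    hasContModulus_of_unifContOn (unifContOn_of_continuousOn hf)⟩

end UniformContinuity

section TernaryBranches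

variable {α β : ℕ → Fin 3} {n : ℕ}

theorem seg3_succ (α : ℕ → Fin 3) (n : ℕ) : seg3 α (n + 1) = seg3 α n ++ [α n] := by
  simp only [seg3, List.ofFn_succ_last, Fin.val_castSucc, Fin.val_last]

theorem length_seg3 (α : ℕ → Fin 3) (n : ℕ) : (seg3 α n).length = n := by
  simp [seg3]

theorem seg3_congr (h : ∀ i < n, α i = β i) : seg3 α n = seg3 β n :=
  congrArg List.ofFn (funext fun i => h i i.2)

theorem exists_forall_seg3 {p : List (Fin 3) → Prop} (h_nil : p [])
    (h_append : ∀ s, p s → ∃ i, p (s ++ [i])) : ∃ α : ℕ → Fin 3, ∀ n, p (seg3 α n) := by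
  choose! next h_next using h_append
  let node (n : ℕ) : List (Fin 3) := Nat.rec [] (fun _ s => s ++ [next s]) n
  have seg3_eq_node (n : ℕ) : seg3 (fun m => next (node m)) n = node n := by
    induction n with
    | zero => rfl
    | succ n ih => rw [seg3_succ, ih]
  refine ⟨fun m => next (node m), fun n => ?_⟩
  rw [seg3_eq_node]
  induction n with
  | zero => exact h_nil
  | succ n ih => exact h_next _ ih

theorem continuous_of_forall_seg3 {X : Type*} [PseudoMetricSpace X] {F : (ℕ → Fin 3) → X}
    (h : ∀ α, ∀ ε > 0, ∃ n, ∀ β, seg3 β n = seg3 α n → dist (F β) (F α) < ε) :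
    Continuous F := by
  rw [continuous_iff_continuousAt]
  refine fun α => Metric.tendsto_nhds.2 fun ε hε => ?_
  obtain ⟨n, hn⟩ := h α ε hε
  filter_upwards [(PiNat.isOpen_cylinder _ α n).mem_nhds (PiNat.self_mem_cylinder α n)] with β hβ
  exact hn β (seg3_congr hβ)

end TernaryBranches

section NodeIntervals

/-- The set of reals in a rational interval, so that `approxI` becomes intersection and codes can
be compared with values of `f`; it is empty if the endpoints are in the wrong order. -/
def realIcc (I : ℚ × ℚ) : Set ℝ := Icc (I.1 : ℝ) I.2

theorem approxI_of_nonempty_inter {I J : ℚ × ℚ} (h : (realIcc I ∩ realIcc J).Nonempty) :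
    approxI I J := by
  obtain ⟨x, hI, hJ⟩ := h
  exact ⟨by exact_mod_cast hJ.1.trans hI.2, by exact_mod_cast hI.1.trans hJ.2⟩

theorem approxI.nonempty_inter {I J : ℚ × ℚ} (h : approxI I J) (hI : (realIcc I).Nonempty)
    (hJ : (realIcc J).Nonempty) : (realIcc I ∩ realIcc J).Nonempty := by
  have h₁ : (J.1 : ℝ) ≤ I.2 := by exact_mod_cast h.1
  have h₂ : (I.1 : ℝ) ≤ J.2 := by exact_mod_cast h.2
  rw [realIcc, nonempty_Icc] at hI hJ
  rw [realIcc, realIcc, Icc_inter_Icc, nonempty_Icc]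
  exact le_inf (sup_le hI h₁) (sup_le h₂ hJ)

theorem triN_append (s : List (Fin 3)) (i : Fin 3) : triN (s ++ [i]) = 2 * triN s + i - 1 := by
  simp [triN]

theorem one_le_triN (s : List (Fin 3)) : 1 ≤ triN s := by
  induction s using List.reverseRecOn with
  | nil => rfl
  | append_singleton s i ih =>
    rw [triN_append]
    lia

theorem cast_triN_append (s : List (Fin 3)) (i : Fin 3) :
    (triN (s ++ [i]) : ℝ) = 2 * triN s + (i : ℕ) - 1 := by
  rw [triN_append, Nat.cast_sub (by linarith [one_le_triN s])]
  push_cast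
  rfl

/-- The midpoint `2^(-(|s|+1)) · N(s)` of the interval `I_s`; along a branch `α` these midpoints
converge to `Φ α`. -/
noncomputable def nodeMid (s : List (Fin 3)) : ℝ := triN s / 2 ^ (s.length + 1)

theorem realIcc_Iseg_eq_closedBall (s : List (Fin 3)) :
    realIcc (Iseg s) = Metric.closedBall (nodeMid s) (1 / 2 ^ (s.length + 1)) := by
  simp [realIcc, Iseg, nodeMid, Real.closedBall_eq_Icc, sub_div, add_div]

theorem realIcc_Iseg_nil : realIcc (Iseg []) = Icc 0 1 := by
  simp [realIcc, Iseg, triN]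

theorem nonempty_realIcc_Iseg (s : List (Fin 3)) : (realIcc (Iseg s)).Nonempty := by
  rw [realIcc_Iseg_eq_closedBall, Metric.nonempty_closedBall]
  positivity

theorem dist_le_of_mem_realIcc_Iseg {s : List (Fin 3)} {x y : ℝ} (hx : x ∈ realIcc (Iseg s))
    (hy : y ∈ realIcc (Iseg s)) : dist x y ≤ 1 / 2 ^ s.length := by
  rw [realIcc_Iseg_eq_closedBall] at hx hy
  calc dist x y ≤ 1 / 2 ^ (s.length + 1) + 1 / 2 ^ (s.length + 1) :=
        (dist_triangle_right x y (nodeMid s)).trans (add_le_add hx hy)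
    _ = 1 / 2 ^ s.length := by ring

theorem nodeMid_append (s : List (Fin 3)) (i : Fin 3) :
    nodeMid (s ++ [i]) = nodeMid s + ((i : ℕ) - 1) * (1 / 2 ^ (s.length + 2)) := by
  rw [nodeMid, nodeMid, cast_triN_append, List.length_append, List.length_singleton]
  ring

theorem dist_nodeMid_append_le (s : List (Fin 3)) (i : Fin 3) :
    dist (nodeMid (s ++ [i])) (nodeMid s) ≤ 1 / 2 ^ (s.length + 2) := by
  have h_digit : |((i : ℕ) : ℝ) - 1| ≤ 1 := by fin_cases i <;> norm_num
  rw [nodeMid_append, dist_self_add_left, Real.norm_eq_abs, abs_mul,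
    abs_of_pos (one_div_pos.2 (by positivity : (0 : ℝ) < 2 ^ (s.length + 2)))]
  exact mul_le_of_le_one_left (by positivity) h_digit

theorem realIcc_Iseg_append_subset (s : List (Fin 3)) (i : Fin 3) :
    realIcc (Iseg (s ++ [i])) ⊆ realIcc (Iseg s) := by
  simp only [realIcc_Iseg_eq_closedBall, List.length_append, List.length_singleton]
  refine Metric.closedBall_subset_closedBall' ?_
  calc (1 : ℝ) / 2 ^ (s.length + 1 + 1) + dist (nodeMid (s ++ [i])) (nodeMid s)
      ≤ 1 / 2 ^ (s.length + 2) + 1 / 2 ^ (s.length + 2) := by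
        gcongr
        exact dist_nodeMid_append_le s i
    _ = 1 / 2 ^ (s.length + 1) := by ring

theorem realIcc_Iseg_subset_unit (s : List (Fin 3)) : realIcc (Iseg s) ⊆ Icc 0 1 := by
  induction s using List.reverseRecOn with
  | nil => exact realIcc_Iseg_nil.subset
  | append_singleton s i ih => exact (realIcc_Iseg_append_subset s i).trans ih

theorem exists_mem_realIcc_Iseg_append {s : List (Fin 3)} {x : ℝ} (hx : x ∈ realIcc (Iseg s)) :
    ∃ i, x ∈ realIcc (Iseg (s ++ [i])) := by
  have h_radius : (1 : ℝ) / 2 ^ (s.length + 1) = 2 * (1 / 2 ^ (s.length + 2)) := by ring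
  simp only [realIcc_Iseg_eq_closedBall, nodeMid_append, Real.closedBall_eq_Icc, mem_Icc,
    List.length_append, List.length_singleton, h_radius] at hx ⊢
  -- The children with digits `0` and `2` are the left and the right half of the parent.
  rcases le_total x (nodeMid s) with hle | hge
  · refine ⟨0, ?_⟩
    norm_num at hx ⊢
    constructor <;> linarith
  · refine ⟨2, ?_⟩
    norm_num at hx ⊢
    constructor <;> linarith

end NodeIntervals

section Phi

theorem dist_nodeMid_seg3_succ_le (α : ℕ → Fin 3) (n : ℕ) :
    dist (nodeMid (seg3 α n)) (nodeMid (seg3 α (n + 1))) ≤ 1 / 2 / 2 / 2 ^ n := by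
  have h := dist_nodeMid_append_le (seg3 α n) (α n)
  rw [length_seg3, ← seg3_succ, dist_comm] at h
  exact h.trans_eq (by ring)

theorem tendsto_nodeMid_seg3 (α : ℕ → Fin 3) :
    Tendsto (fun n => nodeMid (seg3 α n)) atTop (𝓝 (Phi α)) := by
  have h_cauchy : CauchySeq fun n => nodeMid (seg3 α n) :=
    cauchySeq_of_le_geometric_two (dist_nodeMid_seg3_succ_le α)
  have h_lim := tendsto_nhds_limUnder (cauchySeq_tendsto_of_complete h_cauchy)
  simpa only [Phi, nodeMid, length_seg3] using h_lim

theorem Phi_mem_realIcc_Iseg (α : ℕ → Fin 3) (n : ℕ) : Phi α ∈ realIcc (Iseg (seg3 α n)) := by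
  rw [realIcc_Iseg_eq_closedBall, length_seg3, Metric.mem_closedBall']
  calc dist (nodeMid (seg3 α n)) (Phi α) ≤ 1 / 2 / 2 ^ n :=
        dist_le_of_le_geometric_two_of_tendsto (dist_nodeMid_seg3_succ_le α)
          (tendsto_nodeMid_seg3 α) n
    _ = 1 / 2 ^ (n + 1) := by ring

theorem Phi_mem_unit (α : ℕ → Fin 3) : Phi α ∈ Icc (0 : ℝ) 1 :=
  realIcc_Iseg_subset_unit _ (Phi_mem_realIcc_Iseg α 0)

theorem Phi_eq_of_forall_mem {α : ℕ → Fin 3} {x : ℝ} (hx : ∀ n, x ∈ realIcc (Iseg (seg3 α n))) :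
    Phi α = x := by
  refine dist_le_zero.1 (ge_of_tendsto' tendsto_one_div_two_pow fun n => ?_)
  simpa only [length_seg3] using dist_le_of_mem_realIcc_Iseg (Phi_mem_realIcc_Iseg α n) (hx n)

theorem exists_Phi_eq {x : ℝ} (hx : x ∈ Icc (0 : ℝ) 1) : ∃ α, Phi α = x := by
  obtain ⟨α, hα⟩ := exists_forall_seg3 (p := fun s => x ∈ realIcc (Iseg s))
    (realIcc_Iseg_nil ▸ hx) fun _ => exists_mem_realIcc_Iseg_append
  exact ⟨α, Phi_eq_of_forall_mem hα⟩

theorem continuous_Phi : Continuous Phi := by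
  refine continuous_of_forall_seg3 fun α ε hε => ?_
  obtain ⟨n, hn⟩ := exists_one_div_two_pow_lt hε
  refine ⟨n, fun β hβ => lt_of_le_of_lt ?_ hn⟩
  simpa only [length_seg3] using
    dist_le_of_mem_realIcc_Iseg (hβ ▸ Phi_mem_realIcc_Iseg β n) (Phi_mem_realIcc_Iseg α n)

theorem continuousOn_of_continuous_comp_Phi {X : Type*} [TopologicalSpace X] {f : ℝ → X}
    (hf : Continuous (f ∘ Phi)) : ContinuousOn f (Icc 0 1) := by
  let toUnit (α : ℕ → Fin 3) : Icc (0 : ℝ) 1 := ⟨Phi α, Phi_mem_unit α⟩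
  have h_cont : Continuous toUnit := continuous_Phi.subtype_mk _
  have h_surj : Function.Surjective toUnit := fun x =>
    (exists_Phi_eq x.2).imp fun _ => Subtype.ext
  have h_quot : IsQuotientMap toUnit := h_cont.isClosedMap.isQuotientMap h_cont h_surj
  exact continuousOn_iff_continuous_domRestrict.2 (h_quot.continuous_iff.2 hf)

end Phi

namespace IsCode

variable {φ : List (Fin 3) → Option (ℚ × ℚ)} {f : ℝ → ℝ}

theorem goodAt_hIdx (hφ : IsCode φ) (α : ℕ → Fin 3) (k : ℕ) : goodAt φ α k (hIdx φ α k) := by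
  classical
  have h : ∃ n, goodAt φ α k n := hφ.2.1 k α
  rw [hIdx, dif_pos h]
  exact Nat.find_spec h

theorem approxI_of_mem (hφ : IsCode φ) {s t : List (Fin 3)} {I J : ℚ × ℚ} {x : ℝ}
    (hI : φ s = some I) (hJ : φ t = some J) (hs : x ∈ realIcc (Iseg s))
    (ht : x ∈ realIcc (Iseg t)) : approxI I J :=
  hφ.2.2.2 s t I J hI hJ (approxI_of_nonempty_inter ⟨x, hs, ht⟩)

theorem mapsTo_of_inducedBy (hφ : IsCode φ) (hf : InducedBy f φ) {s : List (Fin 3)} {I : ℚ × ℚ}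
    (hI : φ s = some I) : MapsTo f (realIcc (Iseg s)) (realIcc I) := by
  intro x hx
  obtain ⟨α, rfl⟩ := exists_Phi_eq (realIcc_Iseg_subset_unit s hx)
  have h_bounds (m : ℕ) : (I.1 : ℝ) - 1 / 2 ^ m ≤ leftOf (φ (seg3 α (hIdx φ α m))) ∧
      (leftOf (φ (seg3 α (hIdx φ α m))) : ℝ) ≤ I.2 := by
    obtain ⟨p, q, hpq, h_len⟩ := hφ.goodAt_hIdx α m
    have h_overlap := hφ.approxI_of_mem hI hpq hx (Phi_mem_realIcc_Iseg α _)
    have h_left : (p : ℝ) ≤ I.2 := by exact_mod_cast h_overlap.1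
    have h_right : (I.1 : ℝ) ≤ q := by exact_mod_cast h_overlap.2
    rw [← cast_le_one_div_two_pow, Rat.cast_sub] at h_len
    rw [hpq]
    exact ⟨(by linarith : (I.1 : ℝ) - 1 / 2 ^ m ≤ p), h_left⟩
  have h_lower := tendsto_one_div_two_pow.const_sub (I.1 : ℝ)
  rw [sub_zero] at h_lower
  exact ⟨le_of_tendsto_of_tendsto' h_lower (hf α) fun m => (h_bounds m).1,
    le_of_tendsto' (hf α) fun m => (h_bounds m).2⟩

theorem inducedBy_of_mapsTo (hφ : IsCode φ)
    (hf : ∀ s I, φ s = some I → MapsTo f (realIcc (Iseg s)) (realIcc I)) : InducedBy f φ := by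
  intro α
  refine tendsto_iff_dist_tendsto_zero.2
    (squeeze_zero (fun _ => dist_nonneg) (fun m => ?_) tendsto_one_div_two_pow)
  obtain ⟨p, q, hpq, h_len⟩ := hφ.goodAt_hIdx α m
  have h_mem : f (Phi α) ∈ Icc (p : ℝ) q := hf _ _ hpq (Phi_mem_realIcc_Iseg α _)
  rw [← cast_le_one_div_two_pow, Rat.cast_sub] at h_len
  rw [hpq]
  exact (Real.dist_le_of_mem_Icc (left_mem_Icc.2 (h_mem.1.trans h_mem.2)) h_mem).trans h_len

theorem continuousOn_of_inducedBy (hφ : IsCode φ) (hf : InducedBy f φ) :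
    ContinuousOn f (Icc 0 1) := by
  refine continuousOn_of_continuous_comp_Phi (continuous_of_forall_seg3 fun α ε hε => ?_)
  obtain ⟨k, hk⟩ := exists_one_div_two_pow_lt hε
  obtain ⟨n, p, q, hpq, h_len⟩ := hφ.2.1 k α
  rw [← cast_le_one_div_two_pow, Rat.cast_sub] at h_len
  have h_maps := hφ.mapsTo_of_inducedBy hf hpq
  refine ⟨n, fun β hβ => ?_⟩
  have h_dist := Real.dist_le_of_mem_Icc (h_maps (hβ ▸ Phi_mem_realIcc_Iseg β n))
    (h_maps (Phi_mem_realIcc_Iseg α n))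
  exact (h_dist.trans h_len).trans_lt hk

end IsCode

section RangeCode

/-- The range of `f` on the interval `I_s`, rounded outwards to multiples of `2^(-|s|)`. Coarser
rounding at shorter nodes makes these intervals nested along branches, so that for continuous `f`
they form a code inducing `f`. -/
noncomputable def roundedRange (f : ℝ → ℝ) (s : List (Fin 3)) : ℚ × ℚ :=
  (dyadicFloor s.length (sInf (f '' realIcc (Iseg s))),
    dyadicCeil s.length (sSup (f '' realIcc (Iseg s))))

variable {f : ℝ → ℝ}

theorem nonempty_image_realIcc_Iseg (f : ℝ → ℝ) (s : List (Fin 3)) :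
    (f '' realIcc (Iseg s)).Nonempty :=
  (nonempty_realIcc_Iseg s).image f

theorem isCompact_image_realIcc_Iseg (hf : ContinuousOn f (Icc 0 1)) (s : List (Fin 3)) :
    IsCompact (f '' realIcc (Iseg s)) :=
  isCompact_Icc.image_of_continuousOn (hf.mono (realIcc_Iseg_subset_unit s))

theorem mapsTo_roundedRange (hf : ContinuousOn f (Icc 0 1)) (s : List (Fin 3)) :
    MapsTo f (realIcc (Iseg s)) (realIcc (roundedRange f s)) := by
  intro x hx
  have h_compact := isCompact_image_realIcc_Iseg hf s
  exact ⟨(dyadicFloor_le _ _).trans (csInf_le h_compact.bddBelow (mem_image_of_mem f hx)),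
    (le_csSup h_compact.bddAbove (mem_image_of_mem f hx)).trans (le_dyadicCeil _ _)⟩

theorem nonempty_realIcc_roundedRange (hf : ContinuousOn f (Icc 0 1)) (s : List (Fin 3)) :
    (realIcc (roundedRange f s)).Nonempty :=
  (nonempty_image_realIcc_Iseg f s).mono (mapsTo_roundedRange hf s).image_subset

theorem roundedRange_fst_le_append (hf : ContinuousOn f (Icc 0 1)) (s : List (Fin 3)) (i : Fin 3) :
    (roundedRange f s).1 ≤ (roundedRange f (s ++ [i])).1 := by
  simp only [roundedRange, List.length_append, List.length_singleton]
  refine (dyadicFloor_le_succ _ _).trans (dyadicFloor_monotone _ ?_)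
  exact csInf_le_csInf (isCompact_image_realIcc_Iseg hf s).bddBelow
    (nonempty_image_realIcc_Iseg f _) (image_mono (realIcc_Iseg_append_subset s i))

theorem roundedRange_append_snd_le (hf : ContinuousOn f (Icc 0 1)) (s : List (Fin 3)) (i : Fin 3) :
    (roundedRange f (s ++ [i])).2 ≤ (roundedRange f s).2 := by
  simp only [roundedRange, List.length_append, List.length_singleton]
  refine (dyadicCeil_succ_le _ _).trans (dyadicCeil_monotone _ ?_)
  exact csSup_le_csSup (isCompact_image_realIcc_Iseg hf s).bddAbove
    (nonempty_image_realIcc_Iseg f _) (image_mono (realIcc_Iseg_append_subset s i))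

theorem roundedRange_length_le (hf : ContinuousOn f (Icc 0 1)) {s : List (Fin 3)} {ε : ℝ}
    (h_osc : ∀ x ∈ realIcc (Iseg s), ∀ y ∈ realIcc (Iseg s), |f x - f y| ≤ ε) :
    ((roundedRange f s).2 : ℝ) - (roundedRange f s).1 ≤ ε + 2 * (1 / 2 ^ s.length) := by
  have h_compact := isCompact_image_realIcc_Iseg hf s
  have h_nonempty := nonempty_image_realIcc_Iseg f s
  obtain ⟨x, hx, hx_eq⟩ := h_compact.sInf_mem h_nonempty
  obtain ⟨y, hy, hy_eq⟩ := h_compact.sSup_mem h_nonempty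
  have h_range := (le_abs_self _).trans (h_osc y hy x hx)
  rw [hx_eq, hy_eq] at h_range
  have h_inf := lt_dyadicFloor_add s.length (sInf (f '' realIcc (Iseg s)))
  have h_sup := dyadicCeil_lt_add s.length (sSup (f '' realIcc (Iseg s)))
  simp only [roundedRange]
  linarith

theorem exists_forall_roundedRange_length_le (hf : ContinuousOn f (Icc 0 1)) (k : ℕ) :
    ∃ n : ℕ, ∀ s : List (Fin 3), s.length = n →
      (roundedRange f s).2 - (roundedRange f s).1 ≤ 1 / 2 ^ k := by
  obtain ⟨ω, hω⟩ := unifContOn_of_continuousOn hf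
  refine ⟨max (ω (k + 1)) (k + 2), fun s hs => ?_⟩
  have h_omega : (1 : ℝ) / 2 ^ s.length ≤ 1 / 2 ^ ω (k + 1) := by
    gcongr
    exacts [one_le_two, hs ▸ le_max_left _ _]
  have h_round : (1 : ℝ) / 2 ^ s.length ≤ 1 / 2 ^ (k + 2) := by
    gcongr
    exacts [one_le_two, hs ▸ le_max_right _ _]
  have h_osc : ∀ x ∈ realIcc (Iseg s), ∀ y ∈ realIcc (Iseg s), |f x - f y| ≤ 1 / 2 ^ (k + 1) :=
    fun x hx y hy => hω _ x (realIcc_Iseg_subset_unit s hx) y (realIcc_Iseg_subset_unit s hy)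
      ((dist_le_of_mem_realIcc_Iseg hx hy).trans h_omega)
  rw [← cast_le_one_div_two_pow, Rat.cast_sub]
  calc ((roundedRange f s).2 : ℝ) - (roundedRange f s).1
      ≤ 1 / 2 ^ (k + 1) + 2 * (1 / 2 ^ s.length) := roundedRange_length_le hf h_osc
    _ ≤ 1 / 2 ^ (k + 1) + 2 * (1 / 2 ^ (k + 2)) := by gcongr
    _ = 1 / 2 ^ k := by ring

theorem isCode_roundedRange (hf : ContinuousOn f (Icc 0 1)) :
    IsCode fun s => some (roundedRange f s) := by
  refine ⟨?ordered, ?short, ?nested, ?coherent⟩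
  case ordered =>
    intro s p q h
    have h_le := nonempty_Icc.1 (nonempty_realIcc_roundedRange hf s)
    rw [Option.some.inj h] at h_le
    exact_mod_cast h_le
  case short =>
    intro k α
    obtain ⟨n, hn⟩ := exists_forall_roundedRange_length_le hf k
    exact ⟨n, _, _, rfl, hn _ (length_seg3 α n)⟩
  case nested =>
    rintro s _ ⟨⟩ i
    exact ⟨_, rfl, roundedRange_fst_le_append hf s i, roundedRange_append_snd_le hf s i⟩
  case coherent =>
    rintro s t _ _ ⟨⟩ ⟨⟩ h_overlap
    obtain ⟨x, hs, ht⟩ :=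
      h_overlap.nonempty_inter (nonempty_realIcc_Iseg s) (nonempty_realIcc_Iseg t)
    exact approxI_of_nonempty_inter
      ⟨f x, mapsTo_roundedRange hf s hs, mapsTo_roundedRange hf t ht⟩

theorem inducedBy_roundedRange (hf : ContinuousOn f (Icc 0 1)) :
    InducedBy f fun s => some (roundedRange f s) := by
  refine (isCode_roundedRange hf).inducedBy_of_mapsTo ?_
  rintro s _ ⟨⟩
  exact mapsTo_roundedRange hf s

end RangeCode

theorem exists_code_iff_continuousOn {f : ℝ → ℝ} :
    (∃ φ : List (Fin 3) → Option (ℚ × ℚ), IsCode φ ∧ InducedBy f φ) ↔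
      ContinuousOn f (Icc 0 1) :=
  ⟨fun ⟨_, hφ, hf⟩ => hφ.continuousOn_of_inducedBy hf,
    fun hf => ⟨_, isCode_roundedRange hf, inducedBy_roundedRange hf⟩⟩

theorem stmt18 (f : ℝ → ℝ) :
    HasContModulus f ↔ ∃ φ : List (Fin 3) → Option (ℚ × ℚ), IsCode φ ∧ InducedBy f φ :=
  hasContModulus_iff_continuousOn.trans exists_code_iff_continuousOn.symm
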